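/- For all integers a ≥ 1, c ≥ 1 and b ≥ 1, the spectral radius of G_1(a,b,c) is strictly greater than the spectral radius of G_2(a, b−1, c), i.e., ρ(G_1(a,b,c)) > ρ(G_2(a,b−1,c)). -/

import Mathlib

open SimpleGraph

/-- Adjacency matrix of a simple graph over ℝ. -/
noncomputable def adjMat {V : Type*} (G : SimpleGraph V) : Matrix V V ℝ :=
  Matrix.of fun i j => @ite ℝ (G.Adj i j) (Classical.propDecidable _) 1 0

/-- Spectral radius: the largest eigenvalue (supremum of the real spectrum)
of the adjacency matrix. -/
noncomputable def specRad {V : Type*} [Fintype V] [DecidableEq V]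
    (G : SimpleGraph V) : ℝ :=
  sSup (spectrum ℝ (adjMat G))

/-- `D` is a dominating set of `G`. -/
def IsDomSet {V : Type*} (G : SimpleGraph V) (D : Finset V) : Prop :=
  ∀ v ∉ D, ∃ u ∈ D, G.Adj u v

/-- The domination number of `G`. -/
noncomputable def domNum {V : Type*} [Fintype V] (G : SimpleGraph V) : ℕ :=
  sInf {k | ∃ D : Finset V, IsDomSet G D ∧ D.card = k}

/-- The tree `G₁(a,b,c)`: the path v1 v4 v5 v6 v3 (vertices `Sum.inl 0, …, Sum.inl 4`
in path order), the centre v2 (`Sum.inl 5`) of a star on `b+1` vertices joined to v5,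
with `a` pendant edges at v1 and `c` pendant edges at v3. -/
def G1graph (a b c : ℕ) : SimpleGraph (Fin 6 ⊕ (Fin a ⊕ Fin b ⊕ Fin c)) :=
  SimpleGraph.fromRel (fun x y =>
    (x = Sum.inl 0 ∧ y = Sum.inl 1) ∨
    (x = Sum.inl 1 ∧ y = Sum.inl 2) ∨
    (x = Sum.inl 2 ∧ y = Sum.inl 3) ∨
    (x = Sum.inl 3 ∧ y = Sum.inl 4) ∨
    (x = Sum.inl 2 ∧ y = Sum.inl 5) ∨
    (∃ j : Fin a, x = Sum.inl 0 ∧ y = Sum.inr (Sum.inl j)) ∨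
    (∃ j : Fin b, x = Sum.inl 5 ∧ y = Sum.inr (Sum.inr (Sum.inl j))) ∨
    (∃ j : Fin c, x = Sum.inl 4 ∧ y = Sum.inr (Sum.inr (Sum.inr j))))

/-- The tree `G₂(a,b,c)`: the path v1 v4 v5 v2 v6 v7 v3 (vertices `Sum.inl 0, …, Sum.inl 6`
in path order), with `a` pendant edges at v1, `b` pendant edges at v2 and `c` pendant
edges at v3. -/
def G2graph (a b c : ℕ) : SimpleGraph (Fin 7 ⊕ (Fin a ⊕ Fin b ⊕ Fin c)) :=
  SimpleGraph.fromRel (fun x y =>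
    (x = Sum.inl 0 ∧ y = Sum.inl 1) ∨
    (x = Sum.inl 1 ∧ y = Sum.inl 2) ∨
    (x = Sum.inl 2 ∧ y = Sum.inl 3) ∨
    (x = Sum.inl 3 ∧ y = Sum.inl 4) ∨
    (x = Sum.inl 4 ∧ y = Sum.inl 5) ∨
    (x = Sum.inl 5 ∧ y = Sum.inl 6) ∨
    (∃ j : Fin a, x = Sum.inl 0 ∧ y = Sum.inr (Sum.inl j)) ∨
    (∃ j : Fin b, x = Sum.inl 3 ∧ y = Sum.inr (Sum.inr (Sum.inl j))) ∨
    (∃ j : Fin c, x = Sum.inl 6 ∧ y = Sum.inr (Sum.inr (Sum.inr j))))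

open Matrix

theorem adjMat_isHermitian {V : Type*} (G : SimpleGraph V) : (adjMat G).IsHermitian := by
  ext i j
  have h := G.adj_comm i j
  by_cases h1 : G.Adj i j
  · simp [adjMat, h1, h.1 h1]
  · simp only [adjMat, Matrix.conjTranspose_apply, Matrix.of_apply, h1, if_false,
      mt h.2 h1, star_trivial]

theorem adjMat_nonneg {V : Type*} (G : SimpleGraph V) (i j : V) : 0 ≤ adjMat G i j := by
  simp only [adjMat, Matrix.of_apply]
  split_ifs <;> norm_num

theorem specRad_psd {V : Type*} [Fintype V] [DecidableEq V] (G : SimpleGraph V) :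
    (specRad G • (1 : Matrix V V ℝ) - adjMat G).PosSemidef := by
  have hH := adjMat_isHermitian G
  rw [Matrix.posSemidef_iff_isHermitian_and_spectrum_nonneg]
  refine ⟨?_, ?_⟩
  · apply Matrix.IsHermitian.sub _ hH
    ext i j
    simp [Matrix.one_apply, eq_comm]
  · intro μ hμ
    have hfin : (spectrum ℝ (adjMat G)).Finite := Matrix.finite_real_spectrum
    rw [← Algebra.algebraMap_eq_smul_one, ← spectrum.singleton_sub_eq] at hμ
    obtain ⟨s, hs, t, ht, rfl⟩ := hμ
    simp only [Set.mem_singleton_iff] at hs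
    subst hs
    have := le_csSup hfin.bddAbove ht
    simp only [Set.mem_ofPred_eq]
    unfold specRad
    linarith

theorem rayleigh_le {V : Type*} [Fintype V] [DecidableEq V] (G : SimpleGraph V) (y : V → ℝ) :
    y ⬝ᵥ (adjMat G *ᵥ y) ≤ specRad G * (y ⬝ᵥ y) := by
  have h := (specRad_psd G).dotProduct_mulVec_nonneg y
  simp [Matrix.sub_mulVec, Matrix.smul_mulVec, dotProduct_sub, dotProduct_smul] at h
  linarith

theorem exists_nonneg_eigen {V : Type*} [Fintype V] [DecidableEq V] [Nonempty V]
    (G : SimpleGraph V) :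
    ∃ x : V → ℝ, x ≠ 0 ∧ (∀ i, 0 ≤ x i) ∧ adjMat G *ᵥ x = specRad G • x := by
  have hH := adjMat_isHermitian G
  have hfin : (spectrum ℝ (adjMat G)).Finite := Matrix.finite_real_spectrum
  have hne : (spectrum ℝ (adjMat G)).Nonempty := by
    rw [hH.spectrum_real_eq_range_eigenvalues]
    exact Set.range_nonempty _
  have hmem : specRad G ∈ spectrum ℝ (adjMat G) := hne.csSup_mem hfin
  obtain ⟨x, hx0, hx⟩ : ∃ x : V → ℝ, x ≠ 0 ∧ adjMat G *ᵥ x = specRad G • x := by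
    rw [← Matrix.spectrum_toLin', ← Module.End.hasEigenvalue_iff_mem_spectrum] at hmem
    obtain ⟨v, hv⟩ := hmem.exists_hasEigenvector
    exact ⟨v, hv.2, by simpa using hv.apply_eq_smul⟩
  refine ⟨fun i => |x i|, ?_, fun i => abs_nonneg _, ?_⟩
  · intro h
    apply hx0
    ext i
    simpa using congrFun h i
  · have h1 : x ⬝ᵥ (adjMat G *ᵥ x) ≤ (fun i => |x i|) ⬝ᵥ (adjMat G *ᵥ (fun i => |x i|)) := by
      simp only [dotProduct, Matrix.mulVec, Finset.mul_sum]
      refine Finset.sum_le_sum fun i _ => Finset.sum_le_sum fun j _ => ?_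
      have hA := adjMat_nonneg G i j
      calc x i * (adjMat G i j * x j) = adjMat G i j * (x i * x j) := by ring
        _ ≤ adjMat G i j * (|x i| * |x j|) := by
          rw [← abs_mul]
          exact mul_le_mul_of_nonneg_left (le_abs_self _) hA
        _ = _ := by ring
    have h2 : (fun i => |x i|) ⬝ᵥ (fun i => |x i|) = x ⬝ᵥ x := by
      simp [dotProduct]
    have h3 := rayleigh_le G (fun i => |x i|)
    rw [hx, dotProduct_smul, smul_eq_mul] at h1
    rw [h2] at h3
    have h4 := ((specRad_psd G).dotProduct_mulVec_zero_iff (fun i => |x i|)).1 (by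
      simp only [Matrix.sub_mulVec, Matrix.smul_mulVec, dotProduct_sub, dotProduct_smul,
        Matrix.one_mulVec, star_trivial, h2, smul_eq_mul]
      linarith)
    rw [Matrix.sub_mulVec, Matrix.smul_mulVec, Matrix.one_mulVec, sub_eq_zero] at h4
    exact h4.symm

theorem G1_mulVec (a b c : ℕ) (y : Fin 6 ⊕ (Fin a ⊕ Fin b ⊕ Fin c) → ℝ) :
    let A := adjMat (G1graph a b c)
    (A *ᵥ y) (.inl 0) = y (.inl 1) + ∑ j, y (.inr (.inl j)) ∧
    (A *ᵥ y) (.inl 1) = y (.inl 0) + y (.inl 2) ∧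
    (A *ᵥ y) (.inl 2) = y (.inl 1) + y (.inl 3) + y (.inl 5) ∧
    (A *ᵥ y) (.inl 3) = y (.inl 2) + y (.inl 4) ∧
    (A *ᵥ y) (.inl 4) = y (.inl 3) + ∑ j, y (.inr (.inr (.inr j))) ∧
    (A *ᵥ y) (.inl 5) = y (.inl 2) + ∑ j, y (.inr (.inr (.inl j))) ∧
    (∀ j, (A *ᵥ y) (.inr (.inl j)) = y (.inl 0)) ∧
    (∀ j, (A *ᵥ y) (.inr (.inr (.inl j))) = y (.inl 5)) ∧
    (∀ j, (A *ᵥ y) (.inr (.inr (.inr j))) = y (.inl 4)) := by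
  intro A
  refine ⟨?_, ?_, ?_, ?_, ?_, ?_, ?_, ?_, ?_⟩ <;> (try intro j) <;>
    simp [A, Matrix.mulVec, dotProduct, adjMat, G1graph, Fintype.sum_sum_type, Fin.sum_univ_six]

theorem G2_mulVec (a b c : ℕ) (y : Fin 7 ⊕ (Fin a ⊕ Fin b ⊕ Fin c) → ℝ) :
    let A := adjMat (G2graph a b c)
    (A *ᵥ y) (.inl 0) = y (.inl 1) + ∑ j, y (.inr (.inl j)) ∧
    (A *ᵥ y) (.inl 1) = y (.inl 0) + y (.inl 2) ∧
    (A *ᵥ y) (.inl 2) = y (.inl 1) + y (.inl 3) ∧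
    (A *ᵥ y) (.inl 3) = y (.inl 2) + y (.inl 4) + ∑ j, y (.inr (.inr (.inl j))) ∧
    (A *ᵥ y) (.inl 4) = y (.inl 3) + y (.inl 5) ∧
    (A *ᵥ y) (.inl 5) = y (.inl 4) + y (.inl 6) ∧
    (A *ᵥ y) (.inl 6) = y (.inl 5) + ∑ j, y (.inr (.inr (.inr j))) ∧
    (∀ j, (A *ᵥ y) (.inr (.inl j)) = y (.inl 0)) ∧
    (∀ j, (A *ᵥ y) (.inr (.inr (.inl j))) = y (.inl 3)) ∧
    (∀ j, (A *ᵥ y) (.inr (.inr (.inr j))) = y (.inl 6)) := by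
  intro A
  refine ⟨?_, ?_, ?_, ?_, ?_, ?_, ?_, ?_, ?_, ?_⟩ <;> (try intro j) <;>
    simp [A, Matrix.mulVec, dotProduct, adjMat, G2graph, Fintype.sum_sum_type, Fin.sum_univ_seven]

/-- The scalar data of a positive eigenvector of `G₂`. -/
theorem G2_data (a b c : ℕ) : ∃ x : Fin 7 → ℝ, 0 < specRad (G2graph a b c) ∧ (∀ i, 0 < x i) ∧
    let l := specRad (G2graph a b c)
    l * x 0 = x 1 + a * (x 0 / l) ∧
    l * x 1 = x 0 + x 2 ∧
    l * x 2 = x 1 + x 3 ∧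
    l * x 3 = x 2 + x 4 + b * (x 3 / l) ∧
    l * x 4 = x 3 + x 5 ∧
    l * x 5 = x 4 + x 6 ∧
    l * x 6 = x 5 + c * (x 6 / l) := by
  obtain ⟨x, hx0, hxn, hx⟩ := exists_nonneg_eigen (G2graph a b c)
  have hl : 0 < specRad (G2graph a b c) := by
    have h := rayleigh_le (G2graph a b c) (Sum.elim (fun i => if i = 0 ∨ i = 1 then 1 else 0) 0)
    obtain ⟨m0, m1, m2, m3, m4, m5, m6, -⟩ := G2_mulVec a b c
      (Sum.elim (fun i => if i = 0 ∨ i = 1 then 1 else 0) 0)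
    simp only [dotProduct, Fintype.sum_sum_type, Fin.sum_univ_seven, m0, m1, m2, m3, m4, m5, m6] at h
    simp at h
    linarith
  obtain ⟨m0, m1, m2, m3, m4, m5, m6, ma, mb, mc⟩ := G2_mulVec a b c x
  simp only [hx, Pi.smul_apply, smul_eq_mul] at m0 m1 m2 m3 m4 m5 m6 ma mb mc
  set l := specRad (G2graph a b c) with hldef
  have la : ∀ j, x (.inr (.inl j)) = x (.inl 0) / l := fun j => by
    rw [eq_div_iff hl.ne', mul_comm]; exact ma j
  have lb : ∀ j, x (.inr (.inr (.inl j))) = x (.inl 3) / l := fun j => by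
    rw [eq_div_iff hl.ne', mul_comm]; exact mb j
  have lc : ∀ j, x (.inr (.inr (.inr j))) = x (.inl 6) / l := fun j => by
    rw [eq_div_iff hl.ne', mul_comm]; exact mc j
  simp only [la, lb, lc, Finset.sum_const, Finset.card_univ, Fintype.card_fin, nsmul_eq_mul]
    at m0 m3 m6
  refine ⟨fun i => x (.inl i), hl, ?_, m0, m1, m2, m3, m4, m5, m6⟩
  have n0 := hxn (.inl 0)
  have n1 := hxn (.inl 1)
  have n2 := hxn (.inl 2)
  have n3 := hxn (.inl 3)
  have n4 := hxn (.inl 4)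
  have n5 := hxn (.inl 5)
  have n6 := hxn (.inl 6)
  have na : 0 ≤ a * (x (.inl 0) / l) := by positivity
  have nb : 0 ≤ b * (x (.inl 3) / l) := by positivity
  have nc : 0 ≤ c * (x (.inl 6) / l) := by positivity
  -- zero propagation
  have z01 : x (.inl 0) = 0 → x (.inl 1) = 0 := fun h => by rw [h] at m0 na; linarith
  have z1 : x (.inl 1) = 0 → x (.inl 0) = 0 ∧ x (.inl 2) = 0 := fun h => by
    rw [h] at m1; constructor <;> linarith
  have z2 : x (.inl 2) = 0 → x (.inl 1) = 0 ∧ x (.inl 3) = 0 := fun h => by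
    rw [h] at m2; constructor <;> linarith
  have z3 : x (.inl 3) = 0 → x (.inl 2) = 0 ∧ x (.inl 4) = 0 := fun h => by
    rw [h] at m3 nb; constructor <;> linarith
  have z4 : x (.inl 4) = 0 → x (.inl 3) = 0 ∧ x (.inl 5) = 0 := fun h => by
    rw [h] at m4; constructor <;> linarith
  have z5 : x (.inl 5) = 0 → x (.inl 4) = 0 ∧ x (.inl 6) = 0 := fun h => by
    rw [h] at m5; constructor <;> linarith
  have z6 : x (.inl 6) = 0 → x (.inl 5) = 0 := fun h => by rw [h] at m6 nc; linarith
  have key : ¬ (x (.inl 3) = 0) := by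
    intro h3
    obtain ⟨h2, h4⟩ := z3 h3
    have h1 := (z2 h2).1
    have h0 := (z1 h1).1
    have h5 := (z4 h4).2
    have h6 := (z5 h5).2
    apply hx0
    ext i
    rcases i with i | i | i | i
    · fin_cases i <;> simp_all
    · simp [la, h0]
    · simp [lb, h3]
    · simp [lc, h6]
  have k2 : ¬ (x (.inl 2) = 0) := fun h => key (z2 h).2
  have k1 : ¬ (x (.inl 1) = 0) := fun h => k2 (z1 h).2
  have k0 : ¬ (x (.inl 0) = 0) := fun h => k1 (z01 h)
  have k4 : ¬ (x (.inl 4) = 0) := fun h => key (z4 h).1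
  have k5 : ¬ (x (.inl 5) = 0) := fun h => k4 (z5 h).1
  have k6 : ¬ (x (.inl 6) = 0) := fun h => k5 (z6 h)
  intro i
  refine lt_of_le_of_ne (hxn _) (Ne.symm ?_)
  fin_cases i <;> assumption

theorem G1_lower (a b c : ℕ) (l : ℝ) (hl : 0 < l) (y : Fin 6 → ℝ) (hy : 0 < y 2)
    (e0 : l * y 0 = y 1 + a * (y 0 / l))
    (e1 : l * y 1 = y 0 + y 2)
    (e2 : l * y 2 < y 1 + y 3 + y 5)
    (e3 : l * y 3 = y 2 + y 4)
    (e4 : l * y 4 = y 3 + c * (y 4 / l))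
    (e5 : l * y 5 = y 2 + b * (y 5 / l)) : l < specRad (G1graph a b c) := by
  let z : Fin 6 ⊕ (Fin a ⊕ Fin b ⊕ Fin c) → ℝ :=
    Sum.elim y (Sum.elim (fun _ => y 0 / l) (Sum.elim (fun _ => y 5 / l) (fun _ => y 4 / l)))
  have h := rayleigh_le (G1graph a b c) z
  obtain ⟨m0, m1, m2, m3, m4, m5, ma, mb, mc⟩ := G1_mulVec a b c z
  have hzz : 0 < z ⬝ᵥ z := by
    have h1 : z ≠ 0 := fun h => hy.ne' (congrFun h (.inl 2))
    have h2 : z ⬝ᵥ z ≠ 0 := fun h => h1 (dotProduct_self_eq_zero.1 h)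
    exact lt_of_le_of_ne (Finset.sum_nonneg fun i _ => mul_self_nonneg _) h2.symm
  have hlt : l * (z ⬝ᵥ z) < z ⬝ᵥ (adjMat (G1graph a b c) *ᵥ z) := by
    simp only [dotProduct, Finset.mul_sum]
    have hv : ∀ i, i ≠ .inl 2 → l * z i = (adjMat (G1graph a b c) *ᵥ z) i := by
      intro i hi
      rcases i with i | i | i | i
      · fin_cases i
        · exact (e0.trans (by simp [z])).trans m0.symm
        · exact e1.trans m1.symm
        · exact absurd rfl hi
        · exact e3.trans m3.symm
        · exact (e4.trans (by simp [z])).trans m4.symm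
        · exact (e5.trans (by simp [z])).trans m5.symm
      · rw [ma]; simp only [z, Sum.elim_inl, Sum.elim_inr]; field_simp
      · rw [mb]; simp only [z, Sum.elim_inl, Sum.elim_inr]; field_simp
      · rw [mc]; simp only [z, Sum.elim_inl, Sum.elim_inr]; field_simp
    have h2 : l * (z (.inl 2) * z (.inl 2)) <
        z (.inl 2) * (adjMat (G1graph a b c) *ᵥ z) (.inl 2) := by
      rw [m2]
      have := mul_lt_mul_of_pos_left e2 hy
      simp only [z, Sum.elim_inl]
      linarith
    refine Finset.sum_lt_sum (fun i _ => ?_) ⟨.inl 2, Finset.mem_univ _, h2⟩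
    by_cases hi : i = .inl 2
    · subst hi; exact h2.le
    · rw [← hv i hi]; apply le_of_eq; ring
  exact lt_of_mul_lt_mul_right (hlt.trans_le h) hzz.le

theorem specRad_G1_gt_G2 (a b c : ℕ) (ha : 1 ≤ a) (hb : 1 ≤ b) (hc : 1 ≤ c) :
    specRad (G2graph a (b - 1) c) < specRad (G1graph a b c) := by
  obtain ⟨x, hl, hx, e0, e1, e2, e3, e4, e5, e6⟩ := G2_data a (b - 1) c
  set l := specRad (G2graph a (b - 1) c)
  have p1 := hx 1
  have p2 := hx 2
  have p3 := hx 3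
  have p4 := hx 4
  have p5 := hx 5
  rw [Nat.cast_sub hb, Nat.cast_one] at e3
  -- `E = l * x 3 * D`
  obtain ⟨E, hE⟩ : ∃ E, E = l * x 2 + l * x 4 - x 3 := ⟨_, rfl⟩
  have hEpos : 0 < E := by rw [hE]; nlinarith
  have e3' : E * l = l * x 3 * (l ^ 2 - b) := by
    field_simp at e3
    rw [hE]; linear_combination (-l) * e3
  refine G1_lower a b c l hl
    ![x 0 * x 4, x 1 * x 4, x 2 * x 4, x 5 * x 2, x 6 * x 2, x 2 * x 4 * (l * x 3) / E]
    ?_ ?_ ?_ ?_ ?_ ?_ ?_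
  · exact mul_pos p2 p4
  · show l * (x 0 * x 4) = x 1 * x 4 + a * (x 0 * x 4 / l)
    linear_combination x 4 * e0
  · show l * (x 1 * x 4) = x 0 * x 4 + x 2 * x 4
    linear_combination x 4 * e1
  · show l * (x 2 * x 4) < x 1 * x 4 + x 5 * x 2 + x 2 * x 4 * (l * x 3) / E
    have h1 : x 1 = l * x 2 - x 3 := by linarith
    have h5 : x 5 = l * x 4 - x 3 := by linarith
    have : 0 < x 1 * x 4 + x 5 * x 2 + x 2 * x 4 * (l * x 3) / E - l * (x 2 * x 4) := by
      have : x 1 * x 4 + x 5 * x 2 + x 2 * x 4 * (l * x 3) / E - l * (x 2 * x 4)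
        = (x 1 * x 5 * (x 2 + x 4)) / E := by
        field_simp
        rw [hE, h1, h5]; ring
      rw [this]; positivity
    linarith
  · show l * (x 5 * x 2) = x 2 * x 4 + x 6 * x 2
    linear_combination x 2 * e5
  · show l * (x 6 * x 2) = x 5 * x 2 + c * (x 6 * x 2 / l)
    linear_combination x 2 * e6
  · show l * (x 2 * x 4 * (l * x 3) / E) = x 2 * x 4 + b * (x 2 * x 4 * (l * x 3) / E / l)
    field_simp
    nlinarith
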